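/- Let n ≥ 1 and suppose ψ is a maximal differentiable solution of ψ'(x) = (2√(n+1)/(1+x²))·(1+ψ(x)²)·(1 − ((2n−1−x²)/(2√(n+1)·x))·ψ(x)) defined near some x₀ ∈ (0, √(2n−1)) with ψ(x₀) < 0. Then there exists x₁ ∈ (0, x₀) with ψ(x) → −∞ as x ↓ x₁. -/

import Mathlib

open Real Set Filter

lemma aux_local (v : ℝ × ℝ → ℝ) (b L : ℝ) (hv : ContDiffAt ℝ 1 v (b, L)) :
    ∃ α : ℝ → ℝ, ∃ ε > 0, α b = L ∧
      ∀ t ∈ Ioo (b - ε) (b + ε), HasDerivAt α (v (t, α t)) t := by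
  have hF : ContDiffAt ℝ 1 (fun p : ℝ × ℝ => ((1 : ℝ), v p)) (b, L) :=
    contDiffAt_const.prodMk hv
  obtain ⟨γ, h0, ε, hε, hγ⟩ :=
    hF.exists_forall_mem_closedBall_exists_eq_forall_mem_Ioo_hasDerivAt₀ b
  have h1 : ∀ t ∈ Ioo (b - ε) (b + ε), HasDerivAt (fun s => (γ s).1) 1 t := fun t ht => by
    exact (hasFDerivAt_fst (𝕜 := ℝ) (E := ℝ) (F := ℝ)).comp_hasDerivAt t (hγ t ht)
  have h2 : ∀ t ∈ Ioo (b - ε) (b + ε), HasDerivAt (fun s => (γ s).2) (v (γ t)) t :=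
    fun t ht => by
    exact (hasFDerivAt_snd (𝕜 := ℝ) (E := ℝ) (F := ℝ)).comp_hasDerivAt t (hγ t ht)
  have h3 : EqOn (fun s => (γ s).1) (fun s => s) (Ioo (b - ε) (b + ε)) := by
    refine isOpen_Ioo.eqOn_of_deriv_eq isPreconnected_Ioo
      (fun t ht => (h1 t ht).differentiableAt.differentiableWithinAt)
      differentiableOn_id (fun t ht => ?_) (x := b) ⟨by linarith, by linarith⟩ (by simp [h0])
    rw [(h1 t ht).deriv]; simp
  refine ⟨fun s => (γ s).2, ε, hε, by simp [h0], fun t ht => ?_⟩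
  have := h2 t ht
  have e : γ t = (t, (γ t).2) := Prod.ext (h3 ht) rfl
  rw [e] at this
  exact this

lemma aux_extend (v : ℝ × ℝ → ℝ) (b L x₀ : ℝ) (hb : b < x₀) (hv : ContDiffAt ℝ 1 v (b, L))
    (ψ : ℝ → ℝ) (hψ : ∀ x ∈ Ioc b x₀, HasDerivAt ψ (v (x, ψ x)) x)
    (hL : Tendsto ψ (nhdsWithin b (Ioi b)) (nhds L)) :
    ∃ φ : ℝ → ℝ, ∃ ε > 0, (∀ x ∈ Ioc (b - ε) x₀, HasDerivAt φ (v (x, φ x)) x) ∧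
      EqOn φ ψ (Ioc b x₀) := by
  obtain ⟨α, ε, hε, hα0, hα⟩ := aux_local v b L hv
  let φ : ℝ → ℝ := fun x => if b < x then ψ x else α x
  have hφ1 : ∀ x, b < x → φ x = ψ x := fun x hx => if_pos hx
  have hφ2 : ∀ x, x ≤ b → φ x = α x := fun x hx => if_neg (not_lt.2 hx)
  have hφb : φ b = L := by rw [hφ2 b le_rfl, hα0]
  have hgt : ∀ x ∈ Ioc b x₀, HasDerivAt φ (v (x, φ x)) x := by
    intro x hx
    rw [hφ1 x hx.1]
    refine (hψ x hx).congr_of_eventuallyEq ?_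
    filter_upwards [Ioi_mem_nhds hx.1] with y hy using hφ1 y hy
  refine ⟨φ, ε, hε, fun x hx => ?_, fun x hx => hφ1 x hx.1⟩
  rcases lt_trichotomy x b with h | h | h
  · rw [hφ2 x h.le]
    refine (hα x ⟨hx.1, by linarith⟩).congr_of_eventuallyEq ?_
    filter_upwards [Iio_mem_nhds h] with y hy using hφ2 y (le_of_lt hy)
  · subst h
    rw [hφb]
    have hl : HasDerivWithinAt φ (v (x, L)) (Iic x) x := by
      have := (hα x ⟨by linarith, by linarith⟩).hasDerivWithinAt (s := Iic x)
      rw [hα0] at this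
      exact this.congr (fun y hy => hφ2 y hy) (hφ2 x le_rfl)
    have hlim : Tendsto φ (nhdsWithin x (Ioi x)) (nhds L) := by
      refine hL.congr' ?_
      filter_upwards [self_mem_nhdsWithin] with y hy using (hφ1 y hy).symm
    have hr : HasDerivWithinAt φ (v (x, L)) (Ici x) x := by
      refine hasDerivWithinAt_Ici_of_tendsto_deriv (s := Ioo x x₀)
        (fun y hy => (hgt y ⟨hy.1, hy.2.le⟩).differentiableAt.differentiableWithinAt) ?_
        (Ioo_mem_nhdsGT hb) ?_
      · unfold ContinuousWithinAt
        rw [hφb]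
        exact hlim.mono_left (nhdsWithin_mono _ (fun y hy => hy.1))
      · have hid : Tendsto (fun y : ℝ => y) (nhdsWithin x (Ioi x)) (nhds x) :=
          tendsto_id.mono_left nhdsWithin_le_nhds
        have := hv.continuousAt.tendsto.comp (hid.prodMk_nhds hlim)
        refine this.congr' ?_
        filter_upwards [Ioo_mem_nhdsGT hb] with y hy
        exact ((hgt y ⟨hy.1, hy.2.le⟩).deriv).symm
    have := hl.union hr
    rw [Iic_union_Ici] at this
    exact this.hasDerivAt univ_mem
  · exact hgt x ⟨h, hx.2⟩

/-- Fact (*₂): a maximal solution of the reduced translator ODE that is negative at some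
`x₀ ∈ (0, √(2n−1))` blows down to `−∞`
at some positive point `x̄₁ ∈ (0, x₀)` as `x ↓ x̄₁`. Here `b` is the left endpoint of
the maximal interval of existence `(b, x₀]` of the solution `ψ`. -/
theorem stmt_8 (n : ℕ) (hn : 1 ≤ n) (ψ : ℝ → ℝ) (x₀ b : ℝ)
    (hx₀ : x₀ ∈ Set.Ioo 0 (Real.sqrt (2 * n - 1))) (hb : b ∈ Set.Ico 0 x₀)
    (hsol : ∀ x ∈ Set.Ioc b x₀, HasDerivAt ψ
      ((2 * Real.sqrt (n + 1) / (1 + x ^ 2)) * (1 + ψ x ^ 2) *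
        (1 - ((2 * n - 1 - x ^ 2) / (2 * Real.sqrt (n + 1) * x)) * ψ x)) x)
    (hmax : ∀ (φ : ℝ → ℝ), ∀ b' ∈ Set.Ico (0:ℝ) b,
      (∀ x ∈ Set.Ioc b' x₀, HasDerivAt φ
        ((2 * Real.sqrt (n + 1) / (1 + x ^ 2)) * (1 + φ x ^ 2) *
          (1 - ((2 * n - 1 - x ^ 2) / (2 * Real.sqrt (n + 1) * x)) * φ x)) x) →
      ¬ Set.EqOn φ ψ (Set.Ioc b x₀))
    (hval : ψ x₀ < 0) :
    ∃ x₁ ∈ Set.Ioo (0:ℝ) x₀, x₁ = b ∧ Tendsto ψ (nhdsWithin x₁ (Set.Ioi x₁)) atBot := by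
  obtain ⟨hx0, hx1⟩ := hx₀
  obtain ⟨hb0, hb1⟩ := hb
  have hK : x₀ ^ 2 < 2 * n - 1 := (Real.lt_sqrt hx0.le).1 hx1
  have hs : 0 < Real.sqrt (n + 1) := Real.sqrt_pos.2 (by positivity)
  set S := Real.sqrt (n + 1) with hS
  have hxK : ∀ x ∈ Ioc b x₀, 0 < x ∧ x ^ 2 ≤ x₀ ^ 2 := fun x hx =>
    ⟨by linarith [hx.1], by nlinarith [hx.1, hx.2]⟩
  have hcont : ∀ x ∈ Ioc b x₀, ContinuousAt ψ x := fun x hx => (hsol x hx).continuousAt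
  -- negativity
  have hneg : ∀ x ∈ Ioc b x₀, ψ x < 0 := by
    intro y hy
    by_contra hcon
    push Not at hcon
    have hsub : ∀ x ∈ Icc y x₀, x ∈ Ioc b x₀ := fun x hx => ⟨hy.1.trans_le hx.1, hx.2⟩
    have := image_le_of_deriv_right_lt_deriv_boundary (f := fun x => - ψ x)
      (f' := fun x => -((2 * S / (1 + x ^ 2)) * (1 + ψ x ^ 2) *
        (1 - ((2 * n - 1 - x ^ 2) / (2 * S * x)) * ψ x))) (a := y) (b := x₀)
      (fun x hx => ((hcont x (hsub x hx)).neg).continuousWithinAt)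
      (fun x hx => ((hsol x (hsub x (Ico_subset_Icc_self hx))).neg).hasDerivWithinAt)
      (B := fun _ => 0) (B' := fun _ => 0) (by simpa using hcon)
      (fun x => hasDerivAt_const x 0) (by
        intro x hx h0
        have h0' : ψ x = 0 := by simpa using h0
        simp only [h0']
        have : 0 < 2 * S / (1 + x ^ 2) := by positivity
        simpa using this)
      (right_mem_Icc.2 hy.2)
    linarith
  have hfac : ∀ x ∈ Ioc b x₀, 0 ≤ (2 * n - 1 - x ^ 2) / (2 * S * x) := fun x hx => by
    obtain ⟨h1, h2⟩ := hxK x hx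
    have : (0:ℝ) ≤ 2 * n - 1 - x ^ 2 := by linarith
    positivity
  have hmono : StrictMonoOn ψ (Ioc b x₀) := by
    refine strictMonoOn_of_deriv_pos (convex_Ioc b x₀)
      (fun x hx => (hcont x hx).continuousWithinAt) (fun x hx => ?_)
    have hx' := interior_subset hx
    rw [(hsol x hx').deriv]
    have h1 := mul_nonneg (hfac x hx') (neg_nonneg.2 (hneg x hx').le)
    have h2 : 0 < 1 - ((2 * n - 1 - x ^ 2) / (2 * S * x)) * ψ x := by linarith
    positivity
  -- b > 0
  have hbpos : 0 < b := by
    by_contra hcon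
    have hb00 : b = 0 := le_antisymm (not_lt.1 hcon) hb0
    subst hb00
    set m := (2 * n - 1 - x₀ ^ 2) / (1 + x₀ ^ 2) * (-ψ x₀) with hm
    have hmpos : 0 < m := by
      have : (0:ℝ) < 2 * n - 1 - x₀ ^ 2 := by linarith
      have : 0 < -ψ x₀ := by linarith
      positivity
    have hd : ∀ x ∈ Ioc 0 x₀, HasDerivAt (fun y => Real.arctan (ψ y) - m * Real.log y)
        (1 / (1 + ψ x ^ 2) * ((2 * S / (1 + x ^ 2)) * (1 + ψ x ^ 2) *
        (1 - ((2 * n - 1 - x ^ 2) / (2 * S * x)) * ψ x)) - m * x⁻¹) x := fun x hx =>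
      ((hsol x hx).arctan).sub ((Real.hasDerivAt_log hx.1.ne').const_mul m)
    have hmon : MonotoneOn (fun y => Real.arctan (ψ y) - m * Real.log y) (Ioc 0 x₀) := by
      refine monotoneOn_of_deriv_nonneg (convex_Ioc 0 x₀)
        (fun x hx => (hd x hx).continuousAt.continuousWithinAt)
        (fun x hx => (hd x (interior_subset hx)).differentiableAt.differentiableWithinAt)
        (fun x hx => ?_)
      have hx' := interior_subset hx
      rw [(hd x hx').deriv]
      obtain ⟨h1, h2⟩ := hxK x hx'
      have hle : ψ x ≤ ψ x₀ := hmono.monotoneOn hx' (right_mem_Ioc.2 hx0) hx'.2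
      have e : 1 / (1 + ψ x ^ 2) * ((2 * S / (1 + x ^ 2)) * (1 + ψ x ^ 2) *
        (1 - ((2 * n - 1 - x ^ 2) / (2 * S * x)) * ψ x)) =
        2 * S / (1 + x ^ 2) + (2 * n - 1 - x ^ 2) / (1 + x ^ 2) * (- ψ x) * x⁻¹ := by
        have : 1 + ψ x ^ 2 ≠ 0 := by positivity
        have : 1 + x ^ 2 ≠ 0 := by positivity
        field_simp
        ring
      rw [e]
      have h3 : (2 * n - 1 - x₀ ^ 2) / (1 + x₀ ^ 2) ≤ (2 * n - 1 - x ^ 2) / (1 + x ^ 2) := by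
        have : (0:ℝ) ≤ 2 * n - 1 - x ^ 2 := by linarith
        gcongr
      have h4 : m ≤ (2 * n - 1 - x ^ 2) / (1 + x ^ 2) * (- ψ x) := by
        rw [hm]
        have : (0:ℝ) ≤ 2 * n - 1 - x ^ 2 := by linarith
        exact mul_le_mul h3 (by linarith) (by linarith) (by positivity)
      have h5 := mul_le_mul_of_nonneg_right h4 (inv_pos.2 h1).le
      have h6 : 0 < 2 * S / (1 + x ^ 2) := by positivity
      linarith
    obtain ⟨x, hxl, hx⟩ : ∃ x, Real.log x < Real.log x₀ - π / m ∧ x ∈ Ioc 0 x₀ :=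
      ((Real.tendsto_log_nhdsGT_zero.eventually_lt_atBot _).and (Ioc_mem_nhdsGT hx0)).exists
    have h1 := hmon hx (right_mem_Ioc.2 hx0) hx.2
    simp only at h1
    have h2 := Real.neg_pi_div_two_lt_arctan (ψ x)
    have h3 := Real.arctan_lt_pi_div_two (ψ x₀)
    have h4 : m * (Real.log x₀ - Real.log x) > m * (π / m) :=
      mul_lt_mul_of_pos_left (by linarith) hmpos
    rw [mul_div_cancel₀ _ hmpos.ne'] at h4
    linarith
  refine ⟨b, ⟨hbpos, hb1⟩, rfl, ?_⟩
  by_cases hbdd : BddBelow (ψ '' Ioo b x₀)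
  · exfalso
    have hlim := (hmono.monotoneOn.mono Ioo_subset_Ioc_self).tendsto_nhdsWithin_Ioo_right
      (nonempty_Ioo.2 hb1) hbdd
    set L := sInf (ψ '' Ioo b x₀)
    have hv : ContDiffAt ℝ 1 (fun p : ℝ × ℝ => (2 * S / (1 + p.1 ^ 2)) * (1 + p.2 ^ 2) *
        (1 - ((2 * n - 1 - p.1 ^ 2) / (2 * S * p.1)) * p.2)) (b, L) := by
      have e1 : 1 + b ^ 2 ≠ 0 := by positivity
      have e2 : 2 * S * b ≠ 0 := by positivity
      refine ContDiffAt.mul (ContDiffAt.mul (ContDiffAt.div ?_ ?_ e1) ?_)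
        (ContDiffAt.sub ?_ (ContDiffAt.mul (ContDiffAt.div ?_ ?_ e2) ?_)) <;> fun_prop
    obtain ⟨φ, ε, hε, hφ, hEq⟩ := aux_extend _ b L x₀ hb1 hv ψ hsol hlim
    refine hmax φ (max 0 (b - ε)) ⟨le_max_left _ _, max_lt hbpos (by linarith)⟩
      (fun x hx => hφ x ⟨(le_max_right _ _).trans_lt hx.1, hx.2⟩) hEq
  · rw [tendsto_atBot]
    intro M
    rw [not_bddBelow_iff] at hbdd
    obtain ⟨_, ⟨y, hy, rfl⟩, hyM⟩ := hbdd M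
    filter_upwards [Ioo_mem_nhdsGT hy.1] with x hx
    exact (hmono ⟨hx.1, hx.2.le.trans hy.2.le⟩ (Ioo_subset_Ioc_self hy) hx.2).le.trans hyM.le
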